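/- arXiv:1801.02050 — 2 statements merged into one kernel-verified Lean document; each statement's English description precedes it below -/
import Mathlib

section
/- Let f be a probability density on ℝ^d. If Q_f(ε₁, R₁) < ∞ for some ε₁ > 0 and R₁ > 0, then Q_f(ε, R) < ∞ for every ε ∈ (0, ε₁] and every R > 0. -/
open MeasureTheory ENNReal Set Filter ProbabilityTheory Matrix

noncomputable section

/-- `ℝ^d` with the Euclidean distance. -/
abbrev Euc (d : ℕ) := EuclideanSpace ℝ (Fin d)

/-- The volume `V_d = π^(d/2) / Γ(d/2 + 1)` of the unit ball in `ℝ^d`. -/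
def Vd (d : ℕ) : ℝ := Real.pi ^ ((d : ℝ) / 2) / Real.Gamma ((d : ℝ) / 2 + 1)

/-- `f` is a probability density on `ℝ^d` (w.r.t. Lebesgue measure). -/
def IsProbDensity {d : ℕ} (f : Euc d → ℝ) : Prop :=
  Measurable f ∧ (∀ x, 0 ≤ f x) ∧ ∫ x, f x = 1

/-- `G(t) = 0` for `t < 1` and `G(t) = t log t` for `t ≥ 1`. -/
def Gfun (t : ℝ) : ℝ := if t < 1 then 0 else t * Real.log t

/-- `I_f(x,r) = (∫_{B(x,r)} f) / (r^d V_d)`. -/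
def If {d : ℕ} (f : Euc d → ℝ) (x : Euc d) (r : ℝ) : ℝ :=
  (∫ y in Metric.closedBall x r, f y) / (r ^ d * Vd d)

/-- `M_f(x,R) = sup_{r ∈ (0,R]} I_f(x,r)` (with values in `[0,∞]`). -/
def Mf {d : ℕ} (f : Euc d → ℝ) (x : Euc d) (R : ℝ) : ℝ≥0∞ :=
  ⨆ r ∈ Ioc (0 : ℝ) R, ENNReal.ofReal (If f x r)

/-- `m_f(x,R) = inf_{r ∈ (0,R]} I_f(x,r)`. -/
def mf {d : ℕ} (f : Euc d → ℝ) (x : Euc d) (R : ℝ) : ℝ≥0∞ :=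
  ⨅ r ∈ Ioc (0 : ℝ) R, ENNReal.ofReal (If f x r)

/-- `K_f(ε) = ∫ (∫ G(|log ρ(x,y)|) f(y) dy)^{1+ε} f(x) dx`, with values in `[0,∞]`. -/
def Kf {d : ℕ} (f : Euc d → ℝ) (ε : ℝ) : ℝ≥0∞ :=
  ∫⁻ x, (∫⁻ y, ENNReal.ofReal (Gfun |Real.log (dist x y)|) * ENNReal.ofReal (f y)) ^ (1 + ε)
      * ENNReal.ofReal (f x)

/-- `K_{f,2}(ε) = ∫ (∫ G(log² ρ(x,y)) f(y) dy)^{1+ε} f(x) dx`. -/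
def Kf2 {d : ℕ} (f : Euc d → ℝ) (ε : ℝ) : ℝ≥0∞ :=
  ∫⁻ x, (∫⁻ y, ENNReal.ofReal (Gfun ((Real.log (dist x y)) ^ 2)) * ENNReal.ofReal (f y)) ^ (1 + ε)
      * ENNReal.ofReal (f x)

/-- `Q_f(ε,R) = ∫ M_f(x,R)^ε f(x) dx`. -/
def Qf {d : ℕ} (f : Euc d → ℝ) (ε R : ℝ) : ℝ≥0∞ :=
  ∫⁻ x, (Mf f x R) ^ ε * ENNReal.ofReal (f x)

/-- `T_f(ε,R) = ∫ m_f(x,R)^{-ε} f(x) dx` (with `0^{-ε} = ∞`). -/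
def Tf {d : ℕ} (f : Euc d → ℝ) (ε R : ℝ) : ℝ≥0∞ :=
  ∫⁻ x, (mf f x R) ^ (-ε) * ENNReal.ofReal (f x)

/-- The differential Shannon entropy `H(f) = -∫ f log f`. -/
def entropy {d : ℕ} (f : Euc d → ℝ) : ℝ := -∫ x, f x * Real.log (f x)

/-- The Euler–Mascheroni constant `γ = -∫_0^∞ e^{-t} log t dt`. -/
def eulerGamma : ℝ := -∫ t in Ioi (0 : ℝ), Real.exp (-t) * Real.log t

/-- `ρ_i`: the nearest-neighbour distance of `X i` within the sample `X 0, …, X (N-1)`. -/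
def nnDist {d : ℕ} {Ω : Type*} (X : ℕ → Ω → Euc d) (N i : ℕ) (ω : Ω) : ℝ :=
  sInf {r : ℝ | ∃ j, j < N ∧ j ≠ i ∧ r = dist (X i ω) (X j ω)}

/-- The Kozachenko–Leonenko estimate
`H_N = (d/N) Σ_{i<N} log ρ_i + log V_d + γ + log (N-1)`. -/
def KLest {d : ℕ} {Ω : Type*} (X : ℕ → Ω → Euc d) (N : ℕ) (ω : Ω) : ℝ :=
  ((d : ℝ) / N) * ∑ i ∈ Finset.range N, Real.log (nnDist X N i ω)
    + Real.log (Vd d) + eulerGamma + Real.log ((N : ℝ) - 1)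

/-- The density of a nondegenerate Gaussian vector with mean `ν` and covariance `S`. -/
def gaussDensity {d : ℕ} (ν : Euc d) (S : Matrix (Fin d) (Fin d) ℝ) (x : Euc d) : ℝ :=
  (2 * Real.pi) ^ (-(d : ℝ) / 2) * S.det ^ (-(1 : ℝ) / 2) *
    Real.exp (-(1 / 2) * (S⁻¹.mulVec (fun i => x i - ν i) ⬝ᵥ fun i => x i - ν i))

end

/-!
On radii `r > R₁` the ball averages of an integrable `f` are at most `‖f‖₁ / (R₁ ^ d * V_d)`, so
`M_f(x, R)` is at most the maximum of `M_f(x, R₁)` and that constant. Since `Q_f` is an integral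
against the finite measure with density `f⁺`, its finiteness survives taking the maximum of `M_f`
with a constant and, as `a ^ p ≤ 1 + a ^ q` for `0 ≤ p ≤ q`, decreasing the exponent. All these
estimates are pointwise, so the measurability of `M_f` never enters.
-/

section RpowLintegral

theorem ennreal_rpow_le_one_add_rpow (a : ℝ≥0∞) {p q : ℝ} (hp : 0 ≤ p) (hpq : p ≤ q) :
    a ^ p ≤ 1 + a ^ q := by
  rcases le_total a 1 with ha | ha
  · exact le_add_right (ENNReal.rpow_le_one ha hp)
  · exact le_add_left (ENNReal.rpow_le_rpow_of_exponent_le ha hpq)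

variable {α : Type*} [MeasurableSpace α] {μ : Measure α} [IsFiniteMeasure μ] {g h : α → ℝ≥0∞}

theorem lintegral_const_add_lt_top {c : ℝ≥0∞} (hc : c ≠ ⊤) (hg : ∫⁻ x, g x ∂μ < ⊤) :
    ∫⁻ x, (c + g x) ∂μ < ⊤ := by
  rw [lintegral_add_left measurable_const]
  exact ENNReal.add_lt_top.2 ⟨lintegral_const_lt_top hc, hg⟩

theorem lintegral_rpow_lt_top_of_exponent_le {p q : ℝ} (hp : 0 ≤ p) (hpq : p ≤ q)
    (hg : ∫⁻ x, g x ^ q ∂μ < ⊤) : ∫⁻ x, g x ^ p ∂μ < ⊤ :=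
  (lintegral_mono fun x => ennreal_rpow_le_one_add_rpow (g x) hp hpq).trans_lt
    (lintegral_const_add_lt_top ENNReal.one_ne_top hg)

theorem lintegral_rpow_lt_top_of_le_max {c : ℝ≥0∞} (hc : c ≠ ⊤) {p : ℝ} (hp : 0 ≤ p)
    (hgh : ∀ x, g x ≤ max c (h x)) (hh : ∫⁻ x, h x ^ p ∂μ < ⊤) : ∫⁻ x, g x ^ p ∂μ < ⊤ := by
  have rpow_le : ∀ x, g x ^ p ≤ c ^ p + h x ^ p := fun x =>
    calc g x ^ p ≤ max c (h x) ^ p := ENNReal.rpow_le_rpow (hgh x) hp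
      _ = max (c ^ p) (h x ^ p) := (ENNReal.monotone_rpow_of_nonneg hp).map_max
      _ ≤ c ^ p + h x ^ p := max_le_add_of_nonneg zero_le zero_le
  exact (lintegral_mono rpow_le).trans_lt
    (lintegral_const_add_lt_top (ENNReal.rpow_ne_top_of_nonneg hp hc) hh)

end RpowLintegral

section MaximalFunction

theorem Vd_pos (d : ℕ) : 0 < Vd d :=
  div_pos (Real.rpow_pos_of_pos Real.pi_pos _) (Real.Gamma_pos_of_pos (by positivity))

variable {d : ℕ} {f : Euc d → ℝ}

theorem IsProbDensity.integrable (hf : IsProbDensity f) : Integrable f :=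
  .of_integral_ne_zero (hf.2.2.trans_ne one_ne_zero)

theorem If_le_integral_norm_div (hf : Integrable f) (x : Euc d) {s r : ℝ} (hs : 0 < s)
    (hsr : s ≤ r) : If f x r ≤ (∫ y, ‖f y‖) / (s ^ d * Vd d) := by
  have hV := Vd_pos d
  have setIntegral_le : ∫ y in Metric.closedBall x r, f y ≤ ∫ y, ‖f y‖ :=
    calc ∫ y in Metric.closedBall x r, f y
        ≤ ∫ y in Metric.closedBall x r, ‖f y‖ :=
          setIntegral_mono hf.integrableOn hf.norm.integrableOn fun y => Real.le_norm_self (f y)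
      _ ≤ ∫ y, ‖f y‖ :=
          setIntegral_le_integral hf.norm (.of_forall fun y => norm_nonneg (f y))
  unfold If
  gcongr

theorem Mf_le_max (hf : Integrable f) (x : Euc d) {s : ℝ} (hs : 0 < s) (R : ℝ) :
    Mf f x R ≤ max (ENNReal.ofReal ((∫ y, ‖f y‖) / (s ^ d * Vd d))) (Mf f x s) := by
  refine iSup₂_le fun r hr => ?_
  rcases le_total r s with hrs | hsr
  · exact le_max_of_le_right
      (le_iSup₂ (f := fun r (_ : r ∈ Ioc 0 s) => ENNReal.ofReal (If f x r)) r ⟨hr.1, hrs⟩)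
  · exact le_max_of_le_left (ENNReal.ofReal_le_ofReal (If_le_integral_norm_div hf x hs hsr))

theorem Qf_eq_lintegral_withDensity (hf : AEMeasurable f) (ε R : ℝ) :
    Qf f ε R = ∫⁻ x, Mf f x R ^ ε ∂volume.withDensity fun x => ENNReal.ofReal (f x) := by
  rw [lintegral_withDensity_eq_lintegral_mul_non_measurable₀ _ hf.ennreal_ofReal
    (.of_forall fun _ => ENNReal.ofReal_lt_top)]
  exact lintegral_congr fun x => mul_comm _ _

theorem Qf_lt_top_mono_general (hf : Integrable f) {ε ε₁ R₁ : ℝ} (hε : 0 ≤ ε) (hεε₁ : ε ≤ ε₁)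
    (hR₁ : 0 < R₁) (hQ : Qf f ε₁ R₁ < ⊤) (R : ℝ) : Qf f ε R < ⊤ := by
  have := isFiniteMeasure_withDensity_ofReal hf.hasFiniteIntegral
  rw [Qf_eq_lintegral_withDensity hf.aemeasurable] at hQ ⊢
  exact lintegral_rpow_lt_top_of_le_max ENNReal.ofReal_ne_top hε (Mf_le_max hf · hR₁ R)
    (lintegral_rpow_lt_top_of_exponent_le hε hεε₁ hQ)

end MaximalFunction

/-- Lemma 2, part 2: if `Q_f(ε₁,R₁) < ∞` for some `ε₁ > 0`, `R₁ > 0` then `Q_f(ε,R) < ∞`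
for every `ε ∈ (0, ε₁]` and every `R > 0`. -/
theorem Qf_lt_top_mono {d : ℕ} (f : Euc d → ℝ) (hf : IsProbDensity f)
    {ε₁ R₁ : ℝ} (hε₁ : 0 < ε₁) (hR₁ : 0 < R₁) (hQ : Qf f ε₁ R₁ < ⊤) :
    ∀ ε ∈ Ioc (0 : ℝ) ε₁, ∀ R > (0 : ℝ), Qf f ε R < ⊤ :=
  fun _ hε R _ => Qf_lt_top_mono_general hf.integrable hε.1.le hε.2 hR₁ hQ R
end

section
/- Let f be a probability density on ℝ^d. If Q_f(ε₁, R₁) < ∞ and T_f(ε₂, R₂) < ∞ for some positive ε₁, ε₂, R₁, R₂, then ∫_{ℝ^d} |log f(x)| f(x) dx ≤ (1/ε₁) Q_f(ε₁,R₁) + (1/ε₂) T_f(ε₂,R₂) < ∞; in particular the differential entropy H(f) = −∫ f log f is finite. -/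
open MeasureTheory ENNReal Set Filter ProbabilityTheory Matrix

/-!
By the Lebesgue differentiation theorem `I_f(x,r) → f(x)` as `r → 0` for almost every `x`, so
`m_f(x,R) ≤ f(x) ≤ M_f(x,R)` almost everywhere. Since `log t ≤ t^ε / ε`, the positive part of
`log f` is at most `f^ε₁ / ε₁ ≤ M_f^ε₁ / ε₁` and its negative part is at most
`f^(-ε₂) / ε₂ ≤ m_f^(-ε₂) / ε₂`. Integrating against `f` gives the bound.
-/

section LogBound

variable {t ε₁ ε₂ : ℝ}

lemma abs_log_le_rpow_div_add_rpow_neg_div (ht : 0 ≤ t) (hε₁ : 0 < ε₁) (hε₂ : 0 < ε₂) :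
    |Real.log t| ≤ t ^ ε₁ / ε₁ + t ^ (-ε₂) / ε₂ := by
  have log_le : Real.log t ≤ t ^ ε₁ / ε₁ := Real.log_le_rpow_div ht hε₁
  have neg_log_le : -Real.log t ≤ t ^ (-ε₂) / ε₂ := by
    simpa only [Real.log_inv, Real.inv_rpow ht, Real.rpow_neg ht] using
      Real.log_le_rpow_div (inv_nonneg.2 ht) hε₂
  exact abs_le'.2 ⟨le_add_of_le_of_nonneg log_le (by positivity),
    le_add_of_nonneg_of_le (by positivity) neg_log_le⟩

lemma ofReal_abs_log_le (ht : 0 ≤ t) (hε₁ : 0 < ε₁) (hε₂ : 0 < ε₂) :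
    ENNReal.ofReal |Real.log t| ≤ ENNReal.ofReal (1 / ε₁) * ENNReal.ofReal t ^ ε₁
      + ENNReal.ofReal (1 / ε₂) * ENNReal.ofReal t ^ (-ε₂) := by
  rcases ht.eq_or_lt with rfl | ht_pos
  · simp
  calc ENNReal.ofReal |Real.log t|
    _ ≤ ENNReal.ofReal (1 / ε₁ * t ^ ε₁ + 1 / ε₂ * t ^ (-ε₂)) := by
      simpa only [one_div_mul_eq_div] using
        ENNReal.ofReal_le_ofReal (abs_log_le_rpow_div_add_rpow_neg_div ht hε₁ hε₂)
    _ = ENNReal.ofReal (1 / ε₁) * ENNReal.ofReal t ^ ε₁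
        + ENNReal.ofReal (1 / ε₂) * ENNReal.ofReal t ^ (-ε₂) := by
      rw [ENNReal.ofReal_add (by positivity) (by positivity), ENNReal.ofReal_mul (by positivity),
        ENNReal.ofReal_mul (by positivity), ENNReal.ofReal_rpow_of_pos ht_pos,
        ENNReal.ofReal_rpow_of_pos ht_pos]

lemma lintegral_abs_log_mul_self_le {α : Type*} [MeasurableSpace α] {μ : Measure α} {f : α → ℝ}
    (hf : AEMeasurable f μ) (hf_nonneg : 0 ≤ᵐ[μ] f) (hε₁ : 0 < ε₁) (hε₂ : 0 < ε₂) :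
    ∫⁻ x, ENNReal.ofReal (|Real.log (f x)| * f x) ∂μ ≤
      ENNReal.ofReal (1 / ε₁) * ∫⁻ x, ENNReal.ofReal (f x) ^ ε₁ * ENNReal.ofReal (f x) ∂μ
      + ENNReal.ofReal (1 / ε₂)
        * ∫⁻ x, ENNReal.ofReal (f x) ^ (-ε₂) * ENNReal.ofReal (f x) ∂μ := by
  rw [← lintegral_const_mul' _ _ ENNReal.ofReal_ne_top,
    ← lintegral_const_mul' _ _ ENNReal.ofReal_ne_top, ← lintegral_add_left' (by fun_prop)]
  refine lintegral_mono_ae ?_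
  filter_upwards [hf_nonneg] with x hx
  rw [ENNReal.ofReal_mul (abs_nonneg _), ← mul_assoc, ← mul_assoc, ← add_mul]
  gcongr
  exact ofReal_abs_log_le hx hε₁ hε₂

end LogBound

section BallAverages

variable {d : ℕ}

lemma volume_univ_euclideanSpace_of_isEmpty {ι : Type*} [Fintype ι] [IsEmpty ι] :
    volume (univ : Set (EuclideanSpace ℝ ι)) = 1 := by
  rw [← (EuclideanSpace.volume_preserving_symm_measurableEquiv_toLp ι).symm.measure_preimage_equiv,
    preimage_univ, Measure.volume_pi_eq_dirac isEmptyElim, measure_univ]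

lemma volume_real_closedBall_eq (x : Euc d) {r : ℝ} (hr : 0 ≤ r) :
    volume.real (Metric.closedBall x r) = r ^ d * Vd d := by
  obtain rfl | hd := d.eq_zero_or_pos
  · have ball_eq_univ : Metric.closedBall x r = univ :=
      Subsingleton.eq_univ_of_nonempty (Metric.nonempty_closedBall.2 hr)
    simp [ball_eq_univ, measureReal_def, volume_univ_euclideanSpace_of_isEmpty, Vd]
  · have : Nonempty (Fin d) := ⟨⟨0, hd⟩⟩
    have sqrt_pi_pow : √Real.pi ^ d = Real.pi ^ ((d : ℝ) / 2) := by
      rw [Real.rpow_div_two_eq_sqrt _ Real.pi_pos.le, Real.rpow_natCast]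
    rw [measureReal_def, EuclideanSpace.volume_closedBall, Fintype.card_fin, sqrt_pi_pow,
      ENNReal.toReal_mul, ENNReal.toReal_pow, ENNReal.toReal_ofReal hr,
      ENNReal.toReal_ofReal (by positivity), Vd]

lemma If_eq_setAverage (f : Euc d → ℝ) (x : Euc d) {r : ℝ} (hr : 0 ≤ r) :
    If f x r = ⨍ y in Metric.closedBall x r, f y := by
  rw [If, setAverage_eq, volume_real_closedBall_eq x hr, smul_eq_mul, inv_mul_eq_div]

variable {f : Euc d → ℝ} {R : ℝ}

lemma ae_tendsto_If (hf : LocallyIntegrable f) :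
    ∀ᵐ x, Tendsto (If f x) (nhdsWithin 0 (Ioi 0)) (nhds (f x)) := by
  filter_upwards [(Besicovitch.vitaliFamily (volume : Measure (Euc d))).ae_tendsto_average hf]
    with x hx
  refine (hx.comp (Besicovitch.tendsto_filterAt volume x)).congr' ?_
  filter_upwards [self_mem_nhdsWithin] with r hr
  exact (If_eq_setAverage f x (mem_Ioi.1 hr).le).symm

lemma ae_ofReal_le_Mf (hf : LocallyIntegrable f) (hR : 0 < R) :
    ∀ᵐ x, ENNReal.ofReal (f x) ≤ Mf f x R := by
  filter_upwards [ae_tendsto_If hf] with x hx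
  refine le_of_tendsto (ENNReal.tendsto_ofReal hx) ?_
  filter_upwards [Ioc_mem_nhdsGT hR] with r hr
  exact le_iSup₂_of_le r hr le_rfl

lemma ae_mf_le_ofReal (hf : LocallyIntegrable f) (hR : 0 < R) :
    ∀ᵐ x, mf f x R ≤ ENNReal.ofReal (f x) := by
  filter_upwards [ae_tendsto_If hf] with x hx
  refine ge_of_tendsto (ENNReal.tendsto_ofReal hx) ?_
  filter_upwards [Ioc_mem_nhdsGT hR] with r hr
  exact iInf₂_le_of_le r hr le_rfl

lemma lintegral_rpow_mul_self_le_Qf (hf : LocallyIntegrable f) {ε : ℝ} (hε : 0 ≤ ε) (hR : 0 < R) :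
    ∫⁻ x, ENNReal.ofReal (f x) ^ ε * ENNReal.ofReal (f x) ≤ Qf f ε R := by
  refine lintegral_mono_ae ?_
  filter_upwards [ae_ofReal_le_Mf hf hR] with x hx
  gcongr

lemma lintegral_rpow_neg_mul_self_le_Tf (hf : LocallyIntegrable f) {ε : ℝ} (hε : 0 ≤ ε)
    (hR : 0 < R) :
    ∫⁻ x, ENNReal.ofReal (f x) ^ (-ε) * ENNReal.ofReal (f x) ≤ Tf f ε R := by
  refine lintegral_mono_ae ?_
  filter_upwards [ae_mf_le_ofReal hf hR] with x hx
  rw [ENNReal.rpow_neg, ENNReal.rpow_neg]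
  gcongr

end BallAverages

theorem abs_log_density_integrable_general {d : ℕ} {f : Euc d → ℝ} (hf : LocallyIntegrable f)
    (hf_nonneg : 0 ≤ᵐ[volume] f) {ε₁ ε₂ R₁ R₂ : ℝ} (hε₁ : 0 < ε₁) (hε₂ : 0 < ε₂)
    (hR₁ : 0 < R₁) (hR₂ : 0 < R₂) :
    ∫⁻ x, ENNReal.ofReal (|Real.log (f x)| * f x)
      ≤ ENNReal.ofReal (1 / ε₁) * Qf f ε₁ R₁ + ENNReal.ofReal (1 / ε₂) * Tf f ε₂ R₂ := by
  -- The integral is split in terms of `f`, where measurability is at hand, before `M_f` and `m_f`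
  -- enter: for non-measurable summands `∫⁻` is only superadditive.
  refine (lintegral_abs_log_mul_self_le hf.aestronglyMeasurable.aemeasurable hf_nonneg
    hε₁ hε₂).trans ?_
  gcongr
  · exact lintegral_rpow_mul_self_le_Qf hf hε₁.le hR₁
  · exact lintegral_rpow_neg_mul_self_le_Tf hf hε₂.le hR₂

/-- Remark 2: if `Q_f(ε₁,R₁) < ∞` and `T_f(ε₂,R₂) < ∞`, then
`∫ |log f| f ≤ (1/ε₁) Q_f(ε₁,R₁) + (1/ε₂) T_f(ε₂,R₂) < ∞`; in particular the
differential entropy of `f` is finite. -/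
theorem abs_log_density_integrable {d : ℕ} (f : Euc d → ℝ) (hf : IsProbDensity f)
    {ε₁ ε₂ R₁ R₂ : ℝ} (hε₁ : 0 < ε₁) (hε₂ : 0 < ε₂) (hR₁ : 0 < R₁) (hR₂ : 0 < R₂)
    (hQ : Qf f ε₁ R₁ < ⊤) (hT : Tf f ε₂ R₂ < ⊤) :
    (∫⁻ x, ENNReal.ofReal (|Real.log (f x)| * f x)
        ≤ ENNReal.ofReal (1 / ε₁) * Qf f ε₁ R₁ + ENNReal.ofReal (1 / ε₂) * Tf f ε₂ R₂)
      ∧ ∫⁻ x, ENNReal.ofReal (|Real.log (f x)| * f x) < ⊤ := by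
  have bound := abs_log_density_integrable_general
    (integrable_of_integral_eq_one hf.2.2).locallyIntegrable (ae_of_all _ hf.2.1) hε₁ hε₂ hR₁ hR₂
  exact ⟨bound, bound.trans_lt (by finiteness)⟩
end
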